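/- For every integer q ≥ 2, the clique partition number and the independence number of MEbar_q are equal, and θ(MEbar_q) = α(MEbar_q) = (3q+2)/2 if q is even and (3q+3)/2 if q is odd. -/

import Mathlib

/-- `f` describes a partition of the vertices of `G` into at most `k` cliques:
each fibre of `f` is a clique. -/
def IsCliquePartition {V : Type*} (G : SimpleGraph V) {k : ℕ} (f : V → Fin k) : Prop :=
  ∀ a b : V, f a = f b → a ≠ b → G.Adj a b

/-- A clique partition is frozen if every vertex has a non-neighbour in each clique
of the partition other than the clique containing it. -/
def IsFrozenCliquePartition {V : Type*} (G : SimpleGraph V) {k : ℕ} (f : V → Fin k) : Prop :=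
  IsCliquePartition G f ∧ ∀ (v : V) (j : Fin k), j ≠ f v → ∃ w : V, f w = j ∧ ¬ G.Adj v w

/-- The clique partition number `θ(G)`: the least `k` such that the vertices of `G`
can be partitioned into at most `k` cliques. -/
noncomputable def cliquePartNum {V : Type*} (G : SimpleGraph V) : ℕ :=
  sInf {k : ℕ | ∃ f : V → Fin k, IsCliquePartition G f}

/-- The independence number `α(G)`: the maximum size of an independent set of `G`. -/
noncomputable def indepNum {V : Type*} (G : SimpleGraph V) : ℕ :=
  sSup {n : ℕ | ∃ s : Finset V, s.card = n ∧ ∀ a ∈ s, ∀ b ∈ s, a ≠ b → ¬ G.Adj a b}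

/-- The graph `MEbar_q`.  The vertices `0, 1, …, q+1` of `Fin (4q+2)` are
`u_0, …, u_{q+1}` and, for `1 ≤ i ≤ q`, the vertices `q+3i-1, q+3i, q+3i+1` are
`v_{i1}, v_{i2}, v_{i3}`; listed in this order the vertices form a Hamiltonian cycle,
and the extra edges are `u_i v_{i2}` and `v_{i1} v_{i3}` for `1 ≤ i ≤ q`. -/
def MEbar (q : ℕ) : SimpleGraph (Fin (4*q+2)) :=
  SimpleGraph.fromRel (fun a b =>
    b.val = a.val + 1 ∨ (a.val = 0 ∧ b.val = 4*q+1) ∨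
    (∃ i, 1 ≤ i ∧ i ≤ q ∧ a.val = i ∧ b.val = q + 3*i) ∨
    (∃ i, 1 ≤ i ∧ i ≤ q ∧ a.val = q + 3*i - 1 ∧ b.val = q + 3*i + 1))

/-!
The cliques `{u_0, u_1}, {u_2, u_3}, …` (the last one a singleton when `q` is odd) and the triangles
`{v_{i1}, v_{i2}, v_{i3}}` partition the vertices into `⌈(q + 2) / 2⌉ + q` parts. The vertices `u_i`
with `i` even, `v_{i1}` with `i` even and `v_{i2}` with `i` odd meet each of these parts once. They
are independent: the edges `u_i v_{i2}` are avoided by parity, and every edge of the Hamiltonian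
cycle that joins two triangles, or a triangle to some `u_i`, ends at `v_{11}` or at some `v_{i3}`,
none of which is chosen. An independent set never has more vertices than a clique partition has
parts, so both the partition and the independent set are optimal.
-/

namespace IsCliquePartition

variable {V : Type*} {G : SimpleGraph V} {k : ℕ} {f : V → Fin k} {s : Finset V}

theorem card_le_of_isIndepSet (hf : IsCliquePartition G f) (hs : G.IsIndepSet s) :
    s.card ≤ k := by
  have hcol : Gᶜ.Colorable k :=
    ⟨.mk f fun {a b} hadj heq => hadj.2 (hf a b heq hadj.1)⟩
  exact ((SimpleGraph.isClique_compl G).2 hs).card_le_of_colorable hcol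

theorem cliquePartNum_eq_of_isIndepSet (hf : IsCliquePartition G f) (hs : G.IsIndepSet s)
    (hk : k ≤ s.card) : cliquePartNum G = k := by
  refine IsLeast.csInf_eq ⟨⟨f, hf⟩, ?_⟩
  rintro n ⟨g, hg⟩
  exact hk.trans (hg.card_le_of_isIndepSet hs)

theorem indepNum_eq_of_isIndepSet (hf : IsCliquePartition G f) (hs : G.IsIndepSet s)
    (hk : k ≤ s.card) : indepNum G = k := by
  refine IsGreatest.csSup_eq ⟨⟨s, (hf.card_le_of_isIndepSet hs).antisymm hk, ?_⟩, ?_⟩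
  · exact fun a ha b hb hab => hs ha hb hab
  · rintro n ⟨t, rfl, ht⟩
    exact hf.card_le_of_isIndepSet fun a ha b hb hab => ht a ha b hb hab

end IsCliquePartition

namespace MEbar

/-- The partition of the vertices of `MEbar q` into the pairs `{u_{2j}, u_{2j+1}}`, which come first
and of which the last is the singleton `{u_{q+1}}` if `q` is odd, followed by the triangles
`{v_{i1}, v_{i2}, v_{i3}}`. -/
def pairsAndTriangles (q : ℕ) (x : Fin (4 * q + 2)) : Fin ((q + 3) / 2 + q) :=
  ⟨if x.val ≤ q + 1 then x.val / 2 else (q + 3) / 2 + (x.val - (q + 2)) / 3, by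
    split_ifs <;> omega⟩

open Classical in
/-- The set of the vertices `u_i` and `v_{i1}` with `i` even and `v_{i2}` with `i` odd, a maximum
independent set of `MEbar q`. -/
noncomputable def alternatingSet (q : ℕ) : Finset (Fin (4 * q + 2)) :=
  {x | x.val ≤ q + 1 ∧ Even x.val ∨
    ∃ i, 1 ≤ i ∧ i ≤ q ∧ ((Even i ∧ x.val = q + 3 * i - 1) ∨ (Odd i ∧ x.val = q + 3 * i))}

variable {q : ℕ}

theorem mem_alternatingSet {x : Fin (4 * q + 2)} :
    x ∈ alternatingSet q ↔ x.val ≤ q + 1 ∧ Even x.val ∨ ∃ i, 1 ≤ i ∧ i ≤ q ∧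
      ((Even i ∧ x.val = q + 3 * i - 1) ∨ (Odd i ∧ x.val = q + 3 * i)) := by
  simp only [alternatingSet, Finset.mem_filter_univ]

theorem adj_iff_of_lt {a b : Fin (4 * q + 2)} (hab : a < b) :
    (MEbar q).Adj a b ↔ b.val = a.val + 1 ∨ (a.val = 0 ∧ b.val = 4 * q + 1) ∨
      (∃ i, 1 ≤ i ∧ i ≤ q ∧ a.val = i ∧ b.val = q + 3 * i) ∨
      (∃ i, 1 ≤ i ∧ i ≤ q ∧ a.val = q + 3 * i - 1 ∧ b.val = q + 3 * i + 1) := by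
  rw [MEbar, SimpleGraph.fromRel_adj]
  refine ⟨?_, fun h => ⟨hab.ne, Or.inl h⟩⟩
  rintro ⟨-, h | h | h | ⟨i, h⟩ | ⟨i, h⟩⟩
  · exact h
  all_goals omega

variable (q)

theorem isCliquePartition_pairsAndTriangles :
    IsCliquePartition (MEbar q) (pairsAndTriangles q) := by
  intro a b hab hne
  wlog hlt : a < b generalizing a b
  · exact (this b a hab.symm hne.symm (hne.lt_or_gt.resolve_left hlt)).symm
  rw [adj_iff_of_lt hlt]
  by_cases hsucc : b.val = a.val + 1
  · exact Or.inl hsucc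
  -- Two non-consecutive vertices of one part are `v_{i1}` and `v_{i3}`.
  · refine Or.inr (Or.inr (Or.inr ⟨(a.val - (q + 2)) / 3 + 1, ?_⟩))
    have hindex := congrArg Fin.val hab
    simp only [pairsAndTriangles] at hindex
    split_ifs at hindex <;> omega

theorem isIndepSet_alternatingSet : (MEbar q).IsIndepSet (alternatingSet q) := by
  intro a ha b hb hne
  wlog hlt : a < b generalizing a b
  · exact fun hadj => this hb ha hne.symm (hne.lt_or_gt.resolve_left hlt) hadj.symm
  rw [adj_iff_of_lt hlt]
  simp only [Finset.mem_coe, mem_alternatingSet, Nat.even_iff, Nat.odd_iff] at ha hb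
  rcases ha with ha | ⟨i, ha⟩ <;> rcases hb with hb | ⟨j, hb⟩ <;>
    rintro (h | h | ⟨l, h⟩ | ⟨l, h⟩) <;> omega

theorem surjOn_pairsAndTriangles_alternatingSet :
    Set.SurjOn (pairsAndTriangles q) (alternatingSet q)
      (Finset.univ : Finset (Fin ((q + 3) / 2 + q))) := by
  intro j _
  suffices ∃ x ∈ alternatingSet q, pairsAndTriangles q x = j by simpa using this
  simp only [mem_alternatingSet, pairsAndTriangles, Fin.ext_iff]
  rcases lt_or_ge j.val ((q + 3) / 2) with hpair | htriangle
  · refine ⟨⟨2 * j, by omega⟩, Or.inl ⟨?_, even_two_mul _⟩, ?_⟩ <;> grind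
  obtain ⟨i, hi⟩ := Nat.exists_eq_add_of_le htriangle
  rcases (i + 1).even_or_odd with heven | hodd
  · refine ⟨⟨q + 3 * (i + 1) - 1, by omega⟩,
      Or.inr ⟨i + 1, by omega, by omega, Or.inl ⟨heven, rfl⟩⟩, ?_⟩
    grind
  · refine ⟨⟨q + 3 * (i + 1), by omega⟩,
      Or.inr ⟨i + 1, by omega, by omega, Or.inr ⟨hodd, rfl⟩⟩, ?_⟩
    grind

theorem le_card_alternatingSet : (q + 3) / 2 + q ≤ (alternatingSet q).card := by
  simpa only [Finset.card_fin] using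
    Finset.card_le_card_of_surjOn _ (surjOn_pairsAndTriangles_alternatingSet q)

theorem cliquePartNum_eq : cliquePartNum (MEbar q) = (q + 3) / 2 + q :=
  (isCliquePartition_pairsAndTriangles q).cliquePartNum_eq_of_isIndepSet
    (isIndepSet_alternatingSet q) (le_card_alternatingSet q)

theorem indepNum_eq : indepNum (MEbar q) = (q + 3) / 2 + q :=
  (isCliquePartition_pairsAndTriangles q).indepNum_eq_of_isIndepSet
    (isIndepSet_alternatingSet q) (le_card_alternatingSet q)

end MEbar

/-- for every `q ≥ 2`, `θ(MEbar_q) = α(MEbar_q)`, and both equal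
`(3q+2)/2` if `q` is even and `(3q+3)/2` if `q` is odd. -/
theorem stmt7 : ∀ q : ℕ, 2 ≤ q →
    cliquePartNum (MEbar q) = indepNum (MEbar q) ∧
    cliquePartNum (MEbar q) = (if Even q then (3*q+2)/2 else (3*q+3)/2) := by
  intro q _
  rw [MEbar.cliquePartNum_eq, MEbar.indepNum_eq]
  refine ⟨rfl, ?_⟩
  split_ifs with hq <;> rw [Nat.even_iff] at hq <;> omega
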